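/- Let (Ω,F,ℙ) be a probability space and G a sub-σ-algebra. If h : L¹(F) → L¹(G) is monotone, sublinear, G-normalized, and continuous from above, then there exists a convex set Q of probability measures on (Ω,F), each absolutely continuous with respect to ℙ and agreeing with ℙ on G, such that h(X) = sup_{Q ∈ Q} E^Q[X | G] for all X ∈ L¹(F). -/

import Mathlib

open MeasureTheory Filter Topology
open scoped NNReal ENNReal

/-- A monotone positively homogeneous map on a Banach lattice is bounded on the positive cone. -/
theorem exists_norm_map_abs_le {E E' : Type*} [NormedAddCommGroup E] [Lattice E]
    [HasSolidNorm E] [IsOrderedAddMonoid E] [NormedSpace ℝ E] [PosSMulMono ℝ E] [CompleteSpace E]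
    [NormedAddCommGroup E'] [Lattice E'] [HasSolidNorm E'] [IsOrderedAddMonoid E']
    [NormedSpace ℝ E'] {h : E → E'} (hmono : Monotone h)
    (hph : ∀ a : ℝ, 0 ≤ a → ∀ x, h (a • x) = a • h x) :
    ∃ C : ℝ≥0, ∀ x, ‖h |x|‖ ≤ C * ‖x‖ := by
  have h0 : h 0 = 0 := by simpa using hph 0 le_rfl 0
  by_contra! hC
  choose x hx using fun n : ℕ => hC ((4 : ℝ≥0) ^ n)
  have hxpos : ∀ n, 0 < ‖x n‖ := fun n => by
    refine norm_pos_iff.2 fun hn => ?_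
    simpa [hn, h0] using hx n
  set y : ℕ → E := fun n => ((1 / 2 : ℝ) ^ n / ‖x n‖) • |x n| with hy
  have hc : ∀ n, 0 ≤ (1 / 2 : ℝ) ^ n / ‖x n‖ := fun n => by positivity
  have hy0 : ∀ n, 0 ≤ y n := fun n => smul_nonneg (hc n) (abs_nonneg _)
  have hynorm : ∀ n, ‖y n‖ = (1 / 2 : ℝ) ^ n := fun n => by
    rw [hy, norm_smul, Real.norm_of_nonneg (hc n), norm_abs_eq_norm,
      div_mul_cancel₀ _ (hxpos n).ne']
  have hsum : Summable y := Summable.of_norm (by simpa only [hynorm] using summable_geometric_two)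
  have hlt : ∀ n : ℕ, (2 : ℝ) ^ n < ‖h (∑' i, y i)‖ := fun n => by
    have hle : y n ≤ ∑' i, y i := hsum.le_tsum n fun i _ => hy0 i
    have hpos : 0 ≤ h (y n) := h0 ▸ hmono (hy0 n)
    have hnorm : ‖h (y n)‖ ≤ ‖h (∑' i, y i)‖ := by
      refine norm_le_norm_of_abs_le_abs ?_
      rw [abs_of_nonneg hpos, abs_of_nonneg (hpos.trans (hmono hle))]
      exact hmono hle
    refine lt_of_lt_of_le ?_ hnorm
    rw [hy, hph _ (hc n), norm_smul, Real.norm_of_nonneg (hc n), div_mul_eq_mul_div,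
      lt_div_iff₀ (hxpos n)]
    have h2 : (2 : ℝ) ^ n = (1 / 2) ^ n * 4 ^ n := by rw [← mul_pow]; norm_num
    rw [h2, mul_assoc]
    exact mul_lt_mul_of_pos_left (by simpa using hx n) (by positivity)
  obtain ⟨n, hn⟩ := pow_unbounded_of_one_lt ‖h (∑' i, y i)‖ (one_lt_two : (1 : ℝ) < 2)
  exact absurd (hlt n) hn.not_gt

/-- A monotone sublinear map on a Banach lattice is Lipschitz. -/
theorem exists_lipschitzWith_of_monotone_sublinear {E E' : Type*} [NormedAddCommGroup E]
    [Lattice E] [HasSolidNorm E] [IsOrderedAddMonoid E] [NormedSpace ℝ E] [PosSMulMono ℝ E]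
    [CompleteSpace E] [NormedAddCommGroup E'] [Lattice E'] [HasSolidNorm E']
    [IsOrderedAddMonoid E'] [NormedSpace ℝ E'] {h : E → E'} (hmono : Monotone h)
    (hsub : ∀ x y, h (x + y) ≤ h x + h y)
    (hph : ∀ a : ℝ, 0 ≤ a → ∀ x, h (a • x) = a • h x) :
    ∃ C : ℝ≥0, LipschitzWith C h := by
  obtain ⟨C, hC⟩ := exists_norm_map_abs_le hmono hph
  have key : ∀ x y, h x - h y ≤ h |x - y| := fun x y => by
    have := hsub (x - y) y
    rw [sub_add_cancel] at this
    exact (sub_le_iff_le_add.2 this).trans (hmono (le_abs_self _))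
  refine ⟨C, LipschitzWith.of_dist_le_mul fun x y => ?_⟩
  rw [dist_eq_norm, dist_eq_norm]
  refine (norm_le_norm_of_abs_le_abs (b := h |x - y|) ?_).trans (hC _)
  refine (abs_le'.2 ⟨key x y, ?_⟩).trans (le_abs_self _)
  rw [neg_sub, abs_sub_comm]
  exact key y x

/-- A sublinear functional is supported at every point by a linear functional. -/
theorem exists_linearMap_eq_of_sublinear {E : Type*} [AddCommGroup E] [Module ℝ E] {p : E → ℝ}
    (hsub : ∀ x y, p (x + y) ≤ p x + p y)
    (hph : ∀ a : ℝ, 0 ≤ a → ∀ x, p (a • x) = a * p x) (x₀ : E) :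
    ∃ ℓ : E →ₗ[ℝ] ℝ, ℓ x₀ = p x₀ ∧ ∀ x, ℓ x ≤ p x := by
  have h0 : p 0 = 0 := by simpa using hph 0 le_rfl 0
  rcases eq_or_ne x₀ 0 with rfl | hx₀
  · obtain ⟨g, -, hg⟩ := exists_extension_of_le_sublinear (⊥ : E →ₗ.[ℝ] ℝ) p
      (fun c hc => hph c hc.le) hsub (by
        rintro ⟨x, hx⟩
        obtain rfl : x = 0 := (Submodule.mem_bot ℝ).1 hx
        exact ((⊥ : E →ₗ.[ℝ] ℝ).map_zero.trans h0.symm).le)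
    exact ⟨g, by simp [h0], hg⟩
  · obtain ⟨g, hg₀, hg⟩ := exists_extension_of_le_sublinear
      (LinearPMap.mkSpanSingleton x₀ (p x₀) hx₀) p (fun c hc => hph c hc.le) hsub (by
        rintro ⟨x, hx⟩
        obtain ⟨t, rfl⟩ := Submodule.mem_span_singleton.1 hx
        rw [show LinearPMap.mkSpanSingleton x₀ (p x₀) hx₀ ⟨t • x₀, hx⟩ = t * p x₀ from
          LinearPMap.mkSpanSingleton'_apply ..]
        rcases le_total 0 t with ht | ht
        · exact (hph t ht x₀).ge
        · have h1 := hph (-t) (neg_nonneg.2 ht) x₀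
          have h2 := hsub (t • x₀) ((-t) • x₀)
          rw [← add_smul, add_neg_cancel, zero_smul, h0, h1] at h2
          linarith)
    refine ⟨g, ?_, hg⟩
    have := hg₀ ⟨x₀, Submodule.mem_span_singleton_self x₀⟩
    rw [this]
    exact LinearPMap.mkSpanSingleton_apply ℝ ..

section

variable {Ω : Type*} {G F : MeasurableSpace Ω} {P : Measure Ω}

instance MeasureTheory.Lp.instPosSMulMonoReal {p : ℝ≥0∞} : PosSMulMono ℝ (Lp ℝ p P) where
  smul_le_smul_of_nonneg_left a ha X Y hXY := by
    rw [← Lp.coeFn_le] at hXY ⊢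
    filter_upwards [hXY, Lp.coeFn_smul a X, Lp.coeFn_smul a Y] with ω h1 h2 h3
    rw [h2, h3]
    exact mul_le_mul_of_nonneg_left h1 ha

theorem integrable_coeFn_of_le_smul {Q : Measure Ω} {C : ℝ≥0} (hQ : Q ≤ C • P)
    (X : Lp ℝ 1 P) : Integrable X Q :=
  (L1.integrable_coeFn X).of_measure_le_smul (c := (C : ℝ≥0∞)) ENNReal.coe_ne_top hQ

theorem absolutelyContinuous_of_le_smul {Q : Measure Ω} {C : ℝ≥0} (hQ : Q ≤ C • P) : Q ≪ P :=
  (Measure.absolutelyContinuous_of_le hQ).trans Measure.smul_absolutelyContinuous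

theorem continuous_integral_coeFn_of_le_smul {Q : Measure Ω} {C : ℝ≥0} (hQ : Q ≤ C • P) :
    Continuous fun X : Lp ℝ 1 P => ∫ ω, X ω ∂Q := by
  refine (LipschitzWith.of_dist_le_mul (K := C) fun X Y => ?_).continuous
  have hsub : ⇑(X - Y) =ᵐ[Q] fun ω => X ω - Y ω :=
    (absolutelyContinuous_of_le_smul hQ).ae_le (Lp.coeFn_sub X Y)
  rw [dist_eq_norm, dist_eq_norm, ← integral_sub (integrable_coeFn_of_le_smul hQ X)
    (integrable_coeFn_of_le_smul hQ Y), ← integral_congr_ae hsub, L1.norm_eq_integral_norm]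
  calc ‖∫ ω, (X - Y) ω ∂Q‖ ≤ ∫ ω, ‖(X - Y) ω‖ ∂Q := norm_integral_le_integral_norm _
    _ ≤ ∫ ω, ‖(X - Y) ω‖ ∂(C • P) :=
      integral_mono_measure hQ (ae_of_all _ fun _ => norm_nonneg _)
        ((L1.integrable_coeFn _).norm.smul_measure_nnreal)
    _ = C * ∫ ω, ‖(X - Y) ω‖ ∂P := by rw [integral_smul_nnreal_measure]; rfl

/-- A bounded positive functional on `L¹` is integration against a measure with bounded density. -/
theorem exists_measure_integral_eq [IsFiniteMeasure P] (ℓ : Lp ℝ 1 P →ₗ[ℝ] ℝ) {C : ℝ≥0}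
    (hpos : ∀ X, 0 ≤ X → 0 ≤ ℓ X) (hle : ∀ X, ℓ X ≤ C * ‖X‖) :
    ∃ Q : Measure Ω, Q ≤ C • P ∧ ∀ X : Lp ℝ 1 P, ∫ ω, X ω ∂Q = ℓ X := by
  let ind : ∀ s : Set Ω, MeasurableSet s → Lp ℝ 1 P := fun s hs =>
    indicatorConstLp 1 hs (measure_ne_top P s) 1
  have hcont : Continuous ℓ := by
    refine AddMonoidHomClass.continuous_of_bound ℓ C fun X => abs_le.2 ⟨?_, hle X⟩
    have := hle (-X)
    rw [map_neg, norm_neg] at this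
    linarith
  have hind : ∀ s hs, 0 ≤ ℓ (ind s hs) := fun s hs => by
    refine hpos _ ((Lp.coeFn_nonneg _).1 ?_)
    filter_upwards [indicatorConstLp_coeFn (p := 1) (hs := hs) (hμs := measure_ne_top P s)
      (c := (1 : ℝ))] with ω hω
    rw [hω]
    exact Set.indicator_nonneg (fun _ _ => zero_le_one) ω
  have hempty : ℓ (ind ∅ .empty) = 0 := by simp [ind]
  have hunion : ∀ f : ℕ → Set Ω, ∀ hf : ∀ i, MeasurableSet (f i),
      Pairwise (Function.onFun Disjoint f) →
      HasSum (fun i => ℓ (ind (f i) (hf i))) (ℓ (ind (⋃ i, f i) (.iUnion hf))) := by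
    intro f hf hd
    have hm : ∀ n, MeasurableSet (⋃ i ∈ Finset.range n, f i) := fun n =>
      Finset.measurableSet_biUnion _ fun i _ => hf i
    have hfin : ∀ n, ∑ i ∈ Finset.range n, ℓ (ind (f i) (hf i)) =
        ℓ (ind (⋃ i ∈ Finset.range n, f i) (hm n)) := by
      intro n
      induction n with
      | zero => simp [ind]
      | succ n ih =>
        have hdis : Disjoint (⋃ i ∈ Finset.range n, f i) (f n) := by
          simp only [Set.disjoint_iUnion_left]
          exact fun i hi => hd (Finset.mem_range.1 hi).ne
        rw [Finset.sum_range_succ, ih, ← map_add]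
        congr 1
        simp only [ind]
        rw [← indicatorConstLp_disjoint_union (hm n) (hf n) _ _ hdis]
        congr 1
        rw [Finset.range_add_one, Finset.set_biUnion_insert, Set.union_comm]
    rw [hasSum_iff_tendsto_nat_of_nonneg fun i => hind _ _]
    simp_rw [hfin]
    refine (hcont.tendsto _).comp (tendsto_indicatorConstLp_set ENNReal.one_ne_top ?_)
    have hsub : ∀ n, (⋃ i ∈ Finset.range n, f i) ⊆ ⋃ i, f i := fun n =>
      Set.iUnion₂_subset fun i _ => Set.subset_iUnion f i
    have hempt : ⋂ n, symmDiff (⋃ i ∈ Finset.range n, f i) (⋃ i, f i) = ∅ := by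
      refine Set.eq_empty_of_forall_notMem fun ω hω => ?_
      rw [Set.mem_iInter] at hω
      rcases hω 0 with h0 | h0
      · simp at h0
      · obtain ⟨i, hi⟩ := Set.mem_iUnion.1 h0.1
        have hmem : ω ∈ ⋃ j ∈ Finset.range (i + 1), f j :=
          Set.mem_biUnion (Finset.mem_coe.2 (Finset.self_mem_range_succ i)) hi
        rcases hω (i + 1) with h1 | h1
        · exact h1.2 h0.1
        · exact h1.2 hmem
    rw [← measure_empty (μ := P), ← hempt]
    refine tendsto_measure_iInter_atTop
      (fun n => ((hm n).symmDiff (.iUnion hf)).nullMeasurableSet) ?_ ⟨0, measure_ne_top _ _⟩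
    intro a b hab
    simp only [symmDiff_of_le (hsub _)]
    exact Set.sdiff_subset_sdiff_right (Set.biUnion_subset_biUnion_left fun i hi =>
      Finset.range_mono hab hi)
  let Q : Measure Ω := Measure.ofMeasurable (fun s hs => ENNReal.ofReal (ℓ (ind s hs)))
    (by simp [hempty]) fun f hf hd => by
      rw [← (hunion f hf hd).tsum_eq,
        ENNReal.ofReal_tsum_of_nonneg (fun i => hind _ _) (hunion f hf hd).summable]
  have hQ : ∀ s hs, Q s = ENNReal.ofReal (ℓ (ind s hs)) := fun s hs =>
    Measure.ofMeasurable_apply s hs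
  have hQP : Q ≤ C • P := by
    refine Measure.le_iff.2 fun s hs => ?_
    rw [hQ s hs]
    refine (ENNReal.ofReal_le_ofReal (hle _)).trans_eq ?_
    rw [norm_indicatorConstLp one_ne_zero ENNReal.one_ne_top]
    rw [norm_one, one_mul, ENNReal.toReal_one, div_one, Real.rpow_one,
      ENNReal.ofReal_mul C.coe_nonneg, ENNReal.ofReal_coe_nnreal, ofReal_measureReal]
    rfl
  refine ⟨Q, hQP, fun X => ?_⟩
  have hac := absolutelyContinuous_of_le_smul hQP
  induction X using Lp.induction ENNReal.one_ne_top with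
  | indicatorConst c hs hμs =>
    rename_i s
    have h1 : (indicatorConstLp 1 hs hμs.ne c : Lp ℝ 1 P) = c • ind s hs := by
      refine Lp.ext ?_
      filter_upwards [indicatorConstLp_coeFn (p := 1) (hs := hs) (hμs := hμs.ne) (c := c),
        Lp.coeFn_smul c (ind s hs), indicatorConstLp_coeFn (p := 1) (hs := hs)
        (hμs := measure_ne_top P s) (c := (1 : ℝ))] with ω h1 h2 h3
      rw [h1, h2, Pi.smul_apply, h3]
      by_cases hω : ω ∈ s <;> simp [hω]
    rw [Lp.simpleFunc.coe_indicatorConst, integral_congr_ae (hac.ae_le indicatorConstLp_coeFn),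
      integral_indicator_const _ hs, h1, map_smul, Measure.real, hQ s hs,
      ENNReal.toReal_ofReal (hind s hs), smul_eq_mul, smul_eq_mul, mul_comm]
  | add hf hg _ h1 h2 =>
    rw [map_add, ← h1, ← h2, integral_congr_ae (hac.ae_le (Lp.coeFn_add _ _))]
    exact integral_add (integrable_coeFn_of_le_smul hQP _) (integrable_coeFn_of_le_smul hQP _)
  | isClosed => exact isClosed_eq (continuous_integral_coeFn_of_le_smul hQP) hcont

/-- If `h` is sublinear and `G`-normalized, domination of `Q`-integrals by `P`-integrals of `h`
localizes to sets in `G`. -/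
theorem setIntegral_le_setIntegral_of_integral_le [IsFiniteMeasure P]
    (hG : G ≤ F) {h : Lp ℝ 1 P → Lp ℝ 1 P} (hcont : Continuous h) (hmono : Monotone h)
    (hsub : ∀ X Y : Lp ℝ 1 P, h (X + Y) ≤ h X + h Y)
    (hnorm : ∀ X : Lp ℝ 1 P, (∃ g : Ω → ℝ, Measurable[G] g ∧ (X : Ω → ℝ) =ᵐ[P] g) → h X = X)
    {Q : Measure Ω} {C : ℝ≥0} (hQ : Q ≤ C • P)
    (hdom : ∀ X : Lp ℝ 1 P, ∫ ω, X ω ∂Q ≤ ∫ ω, h X ω ∂P)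
    {s : Set Ω} (hs : MeasurableSet[G] s) (X : Lp ℝ 1 P) :
    ∫ ω in s, X ω ∂Q ≤ ∫ ω in s, h X ω ∂P := by
  have hac := absolutelyContinuous_of_le_smul hQ
  refine (Lp.simpleFunc.denseRange ENNReal.one_ne_top).induction_on X (isClosed_le
    (continuous_integral_coeFn_of_le_smul (Measure.restrict_le_self.trans hQ))
    ((continuous_setIntegral s).comp hcont)) fun f => ?_
  obtain ⟨c, hc⟩ := (Lp.simpleFunc.toSimpleFunc f).exists_forall_norm_le
  set X : Lp ℝ 1 P := (f : Lp ℝ 1 P)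
  have hXc : ∀ᵐ ω ∂P, |X ω| ≤ c := by
    filter_upwards [Lp.simpleFunc.toSimpleFunc_eq_toFun f] with ω hω
    rw [← hω]
    exact hc ω
  have hXs : Integrable (s.indicator X) P := (L1.integrable_coeFn X).indicator (hG s hs)
  have hY := hXs.coeFn_toL1
  set Y : Lp ℝ 1 P := hXs.toL1 _
  let Z : Lp ℝ 1 P := indicatorConstLp 1 (hG s hs) (measure_ne_top P _) c
  let W : Lp ℝ 1 P := indicatorConstLp 1 (hG s hs).compl (measure_ne_top P _) c
  have hZ : Z =ᵐ[P] s.indicator fun _ => c := indicatorConstLp_coeFn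
  have hW : W =ᵐ[P] sᶜ.indicator fun _ => c := indicatorConstLp_coeFn
  have hhZ : h Z = Z := hnorm Z ⟨_, Measurable.indicator measurable_const hs, hZ⟩
  have hhW : h W = W := hnorm W ⟨_, Measurable.indicator measurable_const hs.compl, hW⟩
  have hYZ : h Y ≤ Z := by
    rw [← hhZ]
    refine hmono ((Lp.coeFn_le _ _).1 ?_)
    filter_upwards [hY, hZ, hXc] with ω h1 h2 h3
    rw [h1, h2]
    exact Set.indicator_le_indicator (abs_le.1 h3).2
  have hYW : h Y ≤ h X + W := by
    rw [← hhW]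
    refine (hmono ((Lp.coeFn_le Y (X + W)).1 ?_)).trans (hsub X W)
    filter_upwards [hY, hW, hXc, Lp.coeFn_add X W] with ω h1 h2 h3 h4
    rw [h1, h4, Pi.add_apply, h2]
    by_cases hω : ω ∈ s
    · simp [hω]
    · simpa [hω, add_comm] using neg_le_iff_add_nonneg.1 (abs_le.1 h3).1
  have hYX : h Y ≤ᵐ[P] s.indicator (h X) := by
    filter_upwards [(Lp.coeFn_le _ _).2 hYZ, (Lp.coeFn_le _ _).2 hYW, hZ, hW,
      Lp.coeFn_add (h X) W] with ω h1 h2 h3 h4 h5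
    rw [h3] at h1
    rw [h5, Pi.add_apply, h4] at h2
    by_cases hω : ω ∈ s
    · simpa [hω] using h2
    · simpa [hω] using h1
  calc ∫ ω in s, X ω ∂Q = ∫ ω, Y ω ∂Q := by
        rw [← integral_indicator (hG s hs), integral_congr_ae (hac.ae_le hY)]
    _ ≤ ∫ ω, h Y ω ∂P := hdom Y
    _ ≤ ∫ ω, s.indicator (h X) ω ∂P := integral_mono_ae (L1.integrable_coeFn _)
        ((L1.integrable_coeFn _).indicator (hG s hs)) hYX
    _ = ∫ ω in s, h X ω ∂P := integral_indicator (hG s hs)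

theorem measure_eq_of_integral_le [IsFiniteMeasure P]
    (hG : G ≤ F) {h : Lp ℝ 1 P → Lp ℝ 1 P}
    (hnorm : ∀ X : Lp ℝ 1 P, (∃ g : Ω → ℝ, Measurable[G] g ∧ (X : Ω → ℝ) =ᵐ[P] g) → h X = X)
    {Q : Measure Ω} {C : ℝ≥0} (hQ : Q ≤ C • P)
    (hdom : ∀ X : Lp ℝ 1 P, ∫ ω, X ω ∂Q ≤ ∫ ω, h X ω ∂P)
    {s : Set Ω} (hs : MeasurableSet[G] s) : Q s = P s := by
  have : IsFiniteMeasure Q := isFiniteMeasure_of_le _ hQ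
  have hac := absolutelyContinuous_of_le_smul hQ
  have key : ∀ c : ℝ, Q.real s * c ≤ P.real s * c := fun c => by
    have hcoe := indicatorConstLp_coeFn (p := 1) (hs := hG s hs) (hμs := measure_ne_top P s)
      (c := c)
    have := hdom (indicatorConstLp 1 (hG s hs) (measure_ne_top P s) c)
    rwa [hnorm _ ⟨_, Measurable.indicator measurable_const hs, hcoe⟩,
      integral_congr_ae (hac.ae_le hcoe), integral_congr_ae hcoe,
      integral_indicator_const _ (hG s hs), integral_indicator_const _ (hG s hs)] at this
  have h1 := key 1
  have h2 := key (-1)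
  exact (measureReal_eq_measureReal_iff).1 (by linarith)

theorem integral_eq_of_trim_eq (hG : G ≤ F) {Q : Measure Ω}
    (hQP : Q.trim hG = P.trim hG) {g : Ω → ℝ} (hg : StronglyMeasurable[G] g) :
    ∫ ω, g ω ∂Q = ∫ ω, g ω ∂P := by
  rw [integral_trim hG hg, hQP, ← integral_trim hG hg]

theorem integrable_condExp_of_trim_eq (hG : G ≤ F) {Q : Measure Ω}
    (hQP : Q.trim hG = P.trim hG) (f : Ω → ℝ) : Integrable (Q[f | G]) P :=
  integrable_of_integrable_trim hG
    (hQP ▸ integrable_condExp.trim hG stronglyMeasurable_condExp)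

theorem condExp_le_of_setIntegral_le [IsFiniteMeasure P] (hG : G ≤ F)
    {Q : Measure Ω} [IsFiniteMeasure Q] (hQP : Q.trim hG = P.trim hG) {f g : Ω → ℝ}
    (hf : Integrable f Q) (hg : Integrable g P) (hgm : StronglyMeasurable[G] g)
    (hle : ∀ s, MeasurableSet[G] s → ∫ ω in s, f ω ∂Q ≤ ∫ ω in s, g ω ∂P) :
    Q[f | G] ≤ᵐ[P] g := by
  refine ae_le_of_ae_le_trim (hm := hG) (ae_le_of_forall_setIntegral_le
    ((integrable_condExp_of_trim_eq hG hQP f).trim hG stronglyMeasurable_condExp)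
    (hg.trim hG hgm) fun s hs _ => ?_)
  rw [← setIntegral_trim hG hgm hs, ← hQP, ← setIntegral_trim hG stronglyMeasurable_condExp hs,
    setIntegral_condExp hG hf hs]
  exact hle s hs

end

/-- A monotone, sublinear, `G`-normalized, continuous-from-above map
`h : L¹(F) → L¹(G)` is the worst-case (upper envelope) of conditional expectations over a
convex set of probability measures, each absolutely continuous w.r.t. `ℙ` and agreeing
with `ℙ` on `G`. -/
theorem stmt_10 {Ω : Type*} [F : MeasurableSpace Ω] (ℙ : Measure Ω)
    [IsProbabilityMeasure ℙ] (G : MeasurableSpace Ω) (hG : G ≤ F)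
    (h : Lp ℝ 1 ℙ → Lp ℝ 1 ℙ)
    (hmeas : ∀ X : Lp ℝ 1 ℙ, ∃ g : Ω → ℝ, Measurable[G] g ∧ (h X : Ω → ℝ) =ᵐ[ℙ] g)
    (hmono : Monotone h)
    (hsub : ∀ X Y : Lp ℝ 1 ℙ, h (X + Y) ≤ h X + h Y)
    (hph : ∀ a : ℝ, 0 ≤ a → ∀ X, h (a • X) = a • h X)
    (hnorm : ∀ X : Lp ℝ 1 ℙ, (∃ g : Ω → ℝ, Measurable[G] g ∧ (X : Ω → ℝ) =ᵐ[ℙ] g) →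
      h X = X)
    (hca : ∀ (X : ℕ → Lp ℝ 1 ℙ) (X' Y : Lp ℝ 1 ℙ), Antitone X →
      (∀ m, |X m| ≤ Y) → IsGLB (Set.range X) X' →
      (Antitone fun m => h (X m)) ∧ IsGLB (Set.range fun m => h (X m)) (h X')) :
    ∃ 𝒬 : Set (@Measure Ω F),
      (∀ Q ∈ 𝒬, IsProbabilityMeasure Q ∧ Q ≪ ℙ ∧
        ∀ s : Set Ω, MeasurableSet[G] s → Q s = ℙ s) ∧
      (∀ Q₁ ∈ 𝒬, ∀ Q₂ ∈ 𝒬, ∀ t : ENNReal, t ≤ 1 → t • Q₁ + (1 - t) • Q₂ ∈ 𝒬) ∧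
      ∀ X : Lp ℝ 1 ℙ,
        IsLUB {g : Lp ℝ 1 ℙ | ∃ Q ∈ 𝒬, (g : Ω → ℝ) =ᵐ[ℙ] Q[(X : Ω → ℝ) | G]} (h X) := by
  obtain ⟨C, hC⟩ := exists_lipschitzWith_of_monotone_sublinear hmono hsub hph
  have h0 : h 0 = 0 := by simpa using hph 0 le_rfl 0
  have hmeasure : ∀ Q : @Measure Ω F, Q ≤ C • ℙ →
      (∀ X : Lp ℝ 1 ℙ, ∫ ω, X ω ∂Q ≤ ∫ ω, h X ω ∂ℙ) → IsProbabilityMeasure Q ∧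
        (∀ s : Set Ω, MeasurableSet[G] s → Q s = ℙ s) ∧ Q.trim hG = ℙ.trim hG := by
    intro Q hQ hdom
    have heq : ∀ s : Set Ω, MeasurableSet[G] s → Q s = ℙ s := fun s hs =>
      measure_eq_of_integral_le hG hnorm hQ hdom hs
    refine ⟨⟨(heq _ .univ).trans measure_univ⟩, heq, @Measure.ext _ G _ _ fun s hs => ?_⟩
    rw [trim_measurableSet_eq hG hs, trim_measurableSet_eq hG hs, heq s hs]
  have hcond : ∀ Q : @Measure Ω F, Q ≤ C • ℙ →
      (∀ X : Lp ℝ 1 ℙ, ∫ ω, X ω ∂Q ≤ ∫ ω, h X ω ∂ℙ) → ∀ X : Lp ℝ 1 ℙ,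
        Q[(X : Ω → ℝ) | G] ≤ᵐ[ℙ] h X := by
    intro Q hQ hdom X
    obtain ⟨_, -, htrim⟩ := hmeasure Q hQ hdom
    obtain ⟨g, hgm, hg⟩ := hmeas X
    refine (condExp_le_of_setIntegral_le hG htrim (integrable_coeFn_of_le_smul hQ X)
      ((integrable_congr hg).1 (L1.integrable_coeFn _)) hgm.stronglyMeasurable
      fun s hs => ?_).trans hg.symm.le
    rw [← setIntegral_congr_ae₀ (f := h X) (hG s hs).nullMeasurableSet (hg.mono fun _ hω _ => hω)]
    exact setIntegral_le_setIntegral_of_integral_le hG hC.continuous hmono hsub hnorm hQ hdom hs X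
  refine ⟨{Q | Q ≤ C • ℙ ∧ ∀ X : Lp ℝ 1 ℙ, ∫ ω, X ω ∂Q ≤ ∫ ω, h X ω ∂ℙ}, ?_, ?_, ?_⟩
  · rintro Q ⟨hQ, hdom⟩
    obtain ⟨hprob, heq, -⟩ := hmeasure Q hQ hdom
    exact ⟨hprob, absolutelyContinuous_of_le_smul hQ, heq⟩
  · rintro Q₁ ⟨hQ₁, hdom₁⟩ Q₂ ⟨hQ₂, hdom₂⟩ t ht
    have ht' : t ≠ ∞ := ne_top_of_le_ne_top ENNReal.one_ne_top ht
    have ht1 : 1 - t ≠ ∞ := ne_top_of_le_ne_top ENNReal.one_ne_top tsub_le_self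
    have hadd : t + (1 - t) = 1 := add_tsub_cancel_of_le ht
    refine ⟨?_, fun X => ?_⟩
    · refine Measure.le_iff.2 fun s hs => ?_
      calc (t • Q₁ + (1 - t) • Q₂) s = t * Q₁ s + (1 - t) * Q₂ s := rfl
        _ ≤ t * (C • ℙ) s + (1 - t) * (C • ℙ) s := by gcongr
        _ = (C • ℙ) s := by rw [← add_mul, hadd, one_mul]
    · rw [integral_add_measure ((integrable_coeFn_of_le_smul hQ₁ X).smul_measure ht')
        ((integrable_coeFn_of_le_smul hQ₂ X).smul_measure ht1), integral_smul_measure,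
        integral_smul_measure]
      have hreal : t.toReal + (1 - t).toReal = 1 := by
        rw [← ENNReal.toReal_add ht' ht1, hadd, ENNReal.toReal_one]
      have h1 := mul_le_mul_of_nonneg_left (hdom₁ X) t.toReal_nonneg
      have h2 := mul_le_mul_of_nonneg_left (hdom₂ X) (1 - t).toReal_nonneg
      calc _ ≤ t.toReal * ∫ ω, h X ω ∂ℙ + (1 - t).toReal * ∫ ω, h X ω ∂ℙ := add_le_add h1 h2
        _ = _ := by rw [← add_mul, hreal, one_mul]
  · intro X
    refine IsGreatest.isLUB ⟨?_, ?_⟩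
    · have hint : ∀ Y Z : Lp ℝ 1 ℙ, Y ≤ Z → ∫ ω, Y ω ∂ℙ ≤ ∫ ω, Z ω ∂ℙ := fun Y Z hYZ =>
        integral_mono_ae (L1.integrable_coeFn _) (L1.integrable_coeFn _)
          ((Lp.coeFn_le _ _).2 hYZ)
      obtain ⟨ℓ, hℓX, hℓ⟩ := exists_linearMap_eq_of_sublinear
        (p := fun Y => ∫ ω, h Y ω ∂ℙ) (fun Y Z => by
          rw [← integral_add (L1.integrable_coeFn _) (L1.integrable_coeFn _)]
          exact (hint _ _ (hsub Y Z)).trans_eq (integral_congr_ae (Lp.coeFn_add _ _)))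
        (fun a ha Y => by
          rw [hph a ha, ← integral_const_mul]
          exact integral_congr_ae (Lp.coeFn_smul _ _)) X
      obtain ⟨Q, hQ, hQℓ⟩ := exists_measure_integral_eq ℓ (C := C)
        (fun Y hY => by
          have h1 := (hℓ (-Y)).trans (hint _ _ (hmono (neg_nonpos.2 hY)))
          rw [h0, integral_congr_ae (Lp.coeFn_zero ℝ 1 ℙ), map_neg] at h1
          simpa using h1)
        (fun Y => by
          refine (hℓ Y).trans ((Real.le_norm_self _).trans
            ((norm_integral_le_integral_norm _).trans ?_))
          rw [← L1.norm_eq_integral_norm]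
          simpa [h0] using hC.norm_sub_le Y 0)
      have hdom : ∀ Y : Lp ℝ 1 ℙ, ∫ ω, Y ω ∂Q ≤ ∫ ω, h Y ω ∂ℙ := fun Y =>
        (hQℓ Y).trans_le (hℓ Y)
      obtain ⟨_, -, htrim⟩ := hmeasure Q hQ hdom
      refine ⟨Q, ⟨hQ, hdom⟩, ?_⟩
      have hle := hcond Q hQ hdom X
      refine ((integral_eq_iff_of_ae_le (integrable_condExp_of_trim_eq hG htrim _)
        (L1.integrable_coeFn _) hle).1 ?_).symm
      rw [← integral_eq_of_trim_eq hG htrim stronglyMeasurable_condExp, integral_condExp hG,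
        hQℓ, hℓX]
    · rintro g ⟨Q, ⟨hQ, hdom⟩, hg⟩
      exact (Lp.coeFn_le _ _).1 (hg.le.trans (hcond Q hQ hdom X))
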